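/- If Πx:A.B is typable, (Πx:A.B)σ ∈ 𝒟, and x ∉ dom(σ) ∪ FV(σ), then ⟦Πx:A.B⟧σ = {t | ∀a ∈ ⟦A⟧σ, t a ∈ ⟦B⟧[x↦a,σ]} (the interpretation of a product type is the dependent function space of the interpretations). -/

import Mathlib

set_option maxHeartbeats 1000000

/-! # Terms of λΠ/R (de Bruijn representation) -/

inductive Trm (F : Type) : Type
  | type : Trm F
  | kind : Trm F
  | var : ℕ → Trm F
  | sym : F → Trm F
  | pi : Trm F → Trm F → Trm F
  | app : Trm F → Trm F → Trm F
  | lam : Trm F → Trm F → Trm F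

namespace Trm

variable {F : Type}

/-- Lifting of a renaming under a binder. -/
def upRen (ρ : ℕ → ℕ) : ℕ → ℕ
  | 0 => 0
  | n + 1 => ρ n + 1

/-- Renaming of (de Bruijn) variables. -/
def rename (ρ : ℕ → ℕ) : Trm F → Trm F
  | .type => .type
  | .kind => .kind
  | .var n => .var (ρ n)
  | .sym f => .sym f
  | .pi A B => .pi (rename ρ A) (rename (upRen ρ) B)
  | .app t u => .app (rename ρ t) (rename ρ u)
  | .lam A b => .lam (rename ρ A) (rename (upRen ρ) b)

/-- Lifting of a substitution under a binder. -/
def up (σ : ℕ → Trm F) : ℕ → Trm F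
  | 0 => .var 0
  | n + 1 => rename Nat.succ (σ n)

/-- Capture-avoiding (parallel) substitution. -/
def subst (σ : ℕ → Trm F) : Trm F → Trm F
  | .type => .type
  | .kind => .kind
  | .var n => σ n
  | .sym f => .sym f
  | .pi A B => .pi (subst σ A) (subst (up σ) B)
  | .app t u => .app (subst σ t) (subst σ u)
  | .lam A b => .lam (subst σ A) (subst (up σ) b)

/-- Cons of a term on a substitution: `scons a σ` maps `0` to `a` and `n+1` to `σ n`. -/
def scons (a : Trm F) (σ : ℕ → Trm F) : ℕ → Trm F
  | 0 => a
  | n + 1 => σ n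

/-- Substitution of the first free variable: `t[x ↦ a]`. -/
def subst1 (a t : Trm F) : Trm F := subst (scons a .var) t

/-- Shifting of all free variables. -/
def shift : Trm F → Trm F := rename Nat.succ

/-- Application of a head term to a list of arguments: `appList h [t1,…,tn] = h t1 … tn`. -/
def appList (h : Trm F) : List (Trm F) → Trm F
  | [] => h
  | a :: as => appList (.app h a) as

/-- Free (de Bruijn) variables of a term. -/
def FV : Trm F → Set ℕ
  | .type => ∅
  | .kind => ∅
  | .var n => {n}
  | .sym _ => ∅
  | .pi A B => FV A ∪ {n | n + 1 ∈ FV B}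
  | .app t u => FV t ∪ FV u
  | .lam A b => FV A ∪ {n | n + 1 ∈ FV b}

/-- The class 𝕂 of kinds: `K = TYPE | Πx:t.K`. -/
def IsKind : Trm F → Prop
  | .type => True
  | .pi _ B => IsKind B
  | _ => False

/-- Sorts: `TYPE` and `KIND`. -/
def IsSort (s : Trm F) : Prop := s = .type ∨ s = .kind

/-- The product arity of a term: the number of leading products. -/
def piArity : Trm F → ℕ
  | .pi _ B => piArity B + 1
  | _ => 0

/-- Strip `n` leading products. -/
def piCodN : ℕ → Trm F → Trm F
  | 0, T => T
  | n + 1, .pi _ B => piCodN n B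
  | _ + 1, T => T

/-- The first `n` domains of the leading products, as a de Bruijn context
(type of variable `0` first, i.e. innermost first). -/
def teleN : ℕ → Trm F → List (Trm F)
  | 0, _ => []
  | n + 1, .pi A B => teleN n B ++ [A]
  | _ + 1, _ => []

/-- The full telescope of leading products, as a de Bruijn context. -/
def telescope (T : Trm F) : List (Trm F) := teleN (piArity T) T

/-- The domains of the leading products, outermost first. -/
def piDoms : Trm F → List (Trm F)
  | .pi A B => A :: piDoms B
  | _ => []

end Trm

/-- The subterm relation (reflexive and transitive). -/
inductive Subterm {F : Type} : Trm F → Trm F → Prop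
  | refl (t : Trm F) : Subterm t t
  | piL {t A B} : Subterm t A → Subterm t (.pi A B)
  | piR {t A B} : Subterm t B → Subterm t (.pi A B)
  | appL {t u v} : Subterm t u → Subterm t (.app u v)
  | appR {t u v} : Subterm t v → Subterm t (.app u v)
  | lamL {t A b} : Subterm t A → Subterm t (.lam A b)
  | lamR {t A b} : Subterm t b → Subterm t (.lam A b)

/-! # Rewriting -/

/-- A set of rewriting rules `l → r`. -/
abbrev Rules (F : Type) := Set (Trm F × Trm F)

/-- `R` is a rewriting system: for every rule `l → r`, `FV(r) ⊆ FV(l)` and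
`l` is of the form `f l⃗`. -/
def IsRewriteSystem {F : Type} (R : Rules F) : Prop :=
  ∀ p ∈ R, Trm.FV p.2 ⊆ Trm.FV p.1 ∧ ∃ (f : F) (ls : List (Trm F)), p.1 = Trm.appList (.sym f) ls

/-- A symbol is defined if it heads the left-hand side of some rule. -/
def Defined {F : Type} (R : Rules F) (f : F) : Prop :=
  ∃ (ls : List (Trm F)) (r : Trm F), (Trm.appList (.sym f) ls, r) ∈ R

/-- One-step reduction `→ = →β ∪ →R`: β-reduction together with the closure of the
rules of `R` by substitution and context. -/
inductive Red {F : Type} (R : Rules F) : Trm F → Trm F → Prop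
  | beta (A b a : Trm F) : Red R (.app (.lam A b) a) (Trm.subst1 a b)
  | rule {l r : Trm F} (σ : ℕ → Trm F) : (l, r) ∈ R → Red R (Trm.subst σ l) (Trm.subst σ r)
  | appL {t t' u} : Red R t t' → Red R (.app t u) (.app t' u)
  | appR {t u u'} : Red R u u' → Red R (.app t u) (.app t u')
  | piL {A A' B} : Red R A A' → Red R (.pi A B) (.pi A' B)
  | piR {A B B'} : Red R B B' → Red R (.pi A B) (.pi A B')
  | lamL {A A' b} : Red R A A' → Red R (.lam A b) (.lam A' b)
  | lamR {A b b'} : Red R b b' → Red R (.lam A b) (.lam A b')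

/-- Multi-step reduction `→*`. -/
def RedStar {F : Type} (R : Rules F) : Trm F → Trm F → Prop := Relation.ReflTransGen (Red R)

/-- Joinability `↓`. -/
def Joinable {F : Type} (R : Rules F) (t u : Trm F) : Prop :=
  ∃ v, RedStar R t v ∧ RedStar R u v

/-- Local confluence: `← · → ⊆ →* · *←`. -/
def LocallyConfluent {F : Type} (R : Rules F) : Prop :=
  ∀ t u v, Red R t u → Red R t v → Joinable R u v

/-- `t` is strongly normalizing (terminating): no infinite reduction sequence from `t`. -/
def SN {F : Type} (R : Rules F) (t : Trm F) : Prop := Acc (fun a b => Red R b a) t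

/-- The set of strongly normalizing terms. -/
def SNset {F : Type} (R : Rules F) : Set (Trm F) := {t | SN R t}

/-- `t` is in normal form. -/
def NormalForm {F : Type} (R : Rules F) (t : Trm F) : Prop := ∀ u, ¬ Red R t u

/-- Neutral terms: `(λx:A.t)u v⃗`, `x v⃗`, or `f v⃗` where every rule `f l⃗ → r ∈ R`
satisfies `|l⃗| ≤ |v⃗|`. -/
def Neutral {F : Type} (R : Rules F) (t : Trm F) : Prop :=
  (∃ (A b a : Trm F) (vs : List (Trm F)), t = Trm.appList (.app (.lam A b) a) vs) ∨
  (∃ (x : ℕ) (vs : List (Trm F)), t = Trm.appList (.var x) vs) ∨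
  (∃ (f : F) (vs : List (Trm F)), t = Trm.appList (.sym f) vs ∧
    ∀ (ls : List (Trm F)) (r : Trm F), (Trm.appList (.sym f) ls, r) ∈ R → ls.length ≤ vs.length)

/-- Computability predicates: `S ⊆ SN`, `S` is closed under reduction, and `S` contains
every neutral term all of whose one-step reducts are in `S`. -/
def IsCompPred {F : Type} (R : Rules F) (S : Set (Trm F)) : Prop :=
  S ⊆ SNset R ∧ (∀ t ∈ S, ∀ u, Red R t u → u ∈ S) ∧
  (∀ t, Neutral R t → (∀ u, Red R t u → u ∈ S) → t ∈ S)

/-! # Typing: λP extended with function symbols and conversion modulo `→` -/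

/-- The typing rules of λΠ/R: the rules of λP (in de Bruijn presentation) with the extra
rule (fun) `⊢ f : Θ_f` and conversion up to joinability for `→`. -/
inductive Typing {F : Type} (R : Rules F) (Θ sΘ : F → Trm F) :
    List (Trm F) → Trm F → Trm F → Prop
  | ax : Typing R Θ sΘ [] .type .kind
  | var {Γ A s} : Trm.IsSort s → Typing R Θ sΘ Γ A s →
      Typing R Θ sΘ (A :: Γ) (.var 0) (Trm.shift A)
  | weak {Γ A s b B} : Trm.IsSort s → Typing R Θ sΘ Γ A s → Typing R Θ sΘ Γ b B →
      Typing R Θ sΘ (A :: Γ) (Trm.shift b) (Trm.shift B)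
  | prod {Γ A B s} : Trm.IsSort s → Typing R Θ sΘ Γ A .type → Typing R Θ sΘ (A :: Γ) B s →
      Typing R Θ sΘ Γ (.pi A B) s
  | abs {Γ A b B s} : Trm.IsSort s → Typing R Θ sΘ (A :: Γ) b B →
      Typing R Θ sΘ Γ (.pi A B) s → Typing R Θ sΘ Γ (.lam A b) (.pi A B)
  | app {Γ t a A B} : Typing R Θ sΘ Γ t (.pi A B) → Typing R Θ sΘ Γ a A →
      Typing R Θ sΘ Γ (.app t a) (Trm.subst1 a B)
  | conv {Γ a A B s} : Typing R Θ sΘ Γ a A → Joinable R A B → Typing R Θ sΘ Γ B s →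
      Trm.IsSort s → Typing R Θ sΘ Γ a B
  | symb (f : F) : Trm.IsSort (sΘ f) → Typing R Θ sΘ [] (Θ f) (sΘ f) →
      Typing R Θ sΘ [] (.sym f) (Θ f)

/-- `→` preserves typing (subject reduction). -/
def PresTyping {F : Type} (R : Rules F) (Θ sΘ : F → Trm F) : Prop :=
  ∀ Γ t u T, Typing R Θ sΘ Γ t T → Red R t u → Typing R Θ sΘ Γ u T

/-- A substitution `γ` is well-typed from `Δ` to `Γ` (for a generic typing judgment `Ty`):
for all `(x : T) ∈ Δ`, `Ty Γ (xγ) (Tγ)`. -/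
def SubstTyped {F : Type} (Ty : List (Trm F) → Trm F → Trm F → Prop)
    (Γ : List (Trm F)) (γ : ℕ → Trm F) (Δ : List (Trm F)) : Prop :=
  ∀ i A, Δ[i]? = some A → Ty Γ (γ i) (Trm.subst (fun j => γ (j + i + 1)) A)

/-! # Interpretation of types as computability predicates -/

/-- `𝕀`: partial functions from terms to sets of terms. -/
abbrev Interp (F : Type) := Trm F → Part (Set (Trm F))

/-- Graph inclusion of partial functions. -/
def InterpLE {F : Type} (I J : Interp F) : Prop := ∀ T S, S ∈ I T → S ∈ J T

/-- `I` is the least fixpoint of `φ` on `𝕀` (ordered by graph inclusion). -/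
def IsLfpInterp {F : Type} (φ : Interp F → Interp F) (I : Interp F) : Prop :=
  φ I = I ∧ ∀ J, φ J = J → InterpLE I J

/-- The domain `D(I)`: terminating terms `T` such that whenever `T →* Πx:A.B`,
`A ∈ dom(I)` and `B[x↦a] ∈ dom(I)` for all `a ∈ I(A)`. -/
def domD {F : Type} (R : Rules F) (I : Interp F) : Set (Trm F) :=
  {T | SN R T ∧ ∀ A B, RedStar R T (.pi A B) →
    (I A).Dom ∧ ∀ S ∈ I A, ∀ a ∈ S, (I (Trm.subst1 a B)).Dom}

/-- `{t | ∀ a ∈ I(A), t a ∈ I(B[x↦a])}` (relational reading of the partial function `I`). -/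
def piPart {F : Type} (I : Interp F) (A B : Trm F) : Set (Trm F) :=
  {t | ∀ S ∈ I A, ∀ a ∈ S, ∀ S' ∈ I (Trm.subst1 a B), Trm.app t a ∈ S'}

open Classical in
/-- The monotone function `F : 𝕀 → 𝕀`: `dom(F(I)) = D(I)`; `F(I)(T) = SN` if the normal
form of `T` is not a product; `F(I)(T) = {t | ∀ a ∈ I(A), t a ∈ I(B[x↦a])}` if the normal
form of `T` is `Πx:A.B`. -/
noncomputable def interpF {F : Type} (R : Rules F) (I : Interp F) : Interp F := fun T =>
  ⟨T ∈ domD R I, fun _ =>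
    if h : ∃ A B, RedStar R T (.pi A B) ∧ NormalForm R (.pi A B) then
      piPart I h.choose h.choose_spec.choose
    else SNset R⟩

/-- The value of a partial interpretation at `T` (as a set). -/
def partMem {F : Type} (I : Interp F) (T : Trm F) : Set (Trm F) := {t | ∀ S ∈ I T, t ∈ S}

open Classical in
/-- The interpretation `⟦T⟧σ` of a term `T` wrt a substitution `σ`, relative to the least
fixpoint `I = ℐ` of `interpF`: `⟦s⟧σ = 𝒟` for `s` a sort;
`⟦Πx:A.K⟧σ = {t | ∀ a ∈ ⟦A⟧σ, t a ∈ ⟦K⟧[x↦a,σ]}` for `K` a kind;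
`⟦T⟧σ = ℐ(Tσ)` if `T` is neither a kind nor `KIND` and `Tσ ∈ 𝒟`; `⟦T⟧σ = SN` otherwise. -/
noncomputable def interp {F : Type} (R : Rules F) (I : Interp F) :
    Trm F → (ℕ → Trm F) → Set (Trm F)
  | .type, _ => domD R I
  | .kind, _ => domD R I
  | .pi A B, σ =>
      if Trm.IsKind B then
        {t | ∀ a ∈ interp R I A σ, Trm.app t a ∈ interp R I B (Trm.scons a σ)}
      else if Trm.subst σ (.pi A B) ∈ domD R I then partMem I (Trm.subst σ (.pi A B))
      else SNset R
  | .var n, σ =>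
      if Trm.subst σ (.var n) ∈ domD R I then partMem I (Trm.subst σ (.var n)) else SNset R
  | .sym g, σ =>
      if Trm.subst σ (.sym g) ∈ domD R I then partMem I (Trm.subst σ (.sym g)) else SNset R
  | .app t u, σ =>
      if Trm.subst σ (.app t u) ∈ domD R I then partMem I (Trm.subst σ (.app t u)) else SNset R
  | .lam A b, σ =>
      if Trm.subst σ (.lam A b) ∈ domD R I then partMem I (Trm.subst σ (.lam A b)) else SNset R

/-- `σ ⊨ Γ`: a substitution is adequate wrt an environment. -/
def Models {F : Type} (R : Rules F) (I : Interp F) (σ : ℕ → Trm F) (Γ : List (Trm F)) : Prop :=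
  ∀ i A, Γ[i]? = some A → σ i ∈ interp R I A (fun j => σ (j + i + 1))

/-- The typing map `Θ` is adequate: `f ∈ ⟦Θ_f⟧` whenever `⊢ Θ_f : s_f` and `Θ_f ∈ ⟦s_f⟧`. -/
def Adequate {F : Type} (R : Rules F) (Θ sΘ : F → Trm F) (I : Interp F) : Prop :=
  ∀ f : F, Typing R Θ sΘ [] (Θ f) (sΘ f) → Θ f ∈ interp R I (sΘ f) Trm.var →
    Trm.sym f ∈ interp R I (Θ f) Trm.var

/-- The substitution `[x⃗ ↦ l⃗]` (where `ls` lists the images of variables `0, 1, …`). -/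
def mkSubst {F : Type} (ls : List (Trm F)) : ℕ → Trm F := fun i =>
  (ls[i]?).getD (.var (i - ls.length))

/-- Composition of substitutions: `x ↦ (xγ)σ`. -/
def compSubst {F : Type} (γ σ : ℕ → Trm F) : ℕ → Trm F := fun i => Trm.subst σ (γ i)

/-- The set `ℂ` of terms `f t⃗` with `|t⃗| = arit(Θ_f)`, `⊢ Θ_f : s_f`, `Θ_f ∈ ⟦s_f⟧` and
`[x⃗↦t⃗] ⊨ Γ_f`. -/
def CC {F : Type} (R : Rules F) (Θ sΘ : F → Trm F) (I : Interp F) : Set (Trm F) :=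
  {t | ∃ (f : F) (ts : List (Trm F)), t = Trm.appList (.sym f) ts ∧
    ts.length = Trm.piArity (Θ f) ∧
    Typing R Θ sΘ [] (Θ f) (sΘ f) ∧ Θ f ∈ interp R I (sΘ f) Trm.var ∧
    Models R I (mkSubst ts.reverse) (Trm.telescope (Θ f))}

/-! # Dependency pairs -/

/-- Occurrences of `p` in a term, not at the root, such that `p` is not further applied
(i.e. `p` collects all the arguments of its head at this occurrence). -/
inductive MaxOccNR {F : Type} (p : Trm F) : Trm F → Prop
  | appL {u v} : MaxOccNR p u → MaxOccNR p (.app u v)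
  | appR {u v} : MaxOccNR p v → MaxOccNR p (.app u v)
  | appRroot {u} : MaxOccNR p (.app u p)
  | piL {A B} : MaxOccNR p A → MaxOccNR p (.pi A B)
  | piLroot {B} : MaxOccNR p (.pi p B)
  | piR {A B} : MaxOccNR p B → MaxOccNR p (.pi A B)
  | piRroot {A} : MaxOccNR p (.pi A p)
  | lamL {A b} : MaxOccNR p A → MaxOccNR p (.lam A b)
  | lamLroot {b} : MaxOccNR p (.lam p b)
  | lamR {A b} : MaxOccNR p b → MaxOccNR p (.lam A b)
  | lamRroot {A} : MaxOccNR p (.lam A p)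

/-- `p` occurs in `t` as a maximal application. -/
def MaxOcc {F : Type} (p t : Trm F) : Prop := t = p ∨ MaxOccNR p t

/-- Dependency pairs: `f l⃗ > g m⃗` iff there is a rule `f l⃗ → r ∈ R`, `g` is defined and
`g m⃗` is a subterm of `r` such that `m⃗` are all the arguments to which `g` is applied. -/
def DepPair {F : Type} (R : Rules F) (f : F) (ls : List (Trm F)) (g : F)
    (ms : List (Trm F)) : Prop :=
  Defined R g ∧ ∃ r, (Trm.appList (.sym f) ls, r) ∈ R ∧ MaxOcc (Trm.appList (.sym g) ms) r

/-- `f t⃗ →arg f u⃗`: reduction of exactly one argument. -/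
def ArgRed {F : Type} (R : Rules F) (t u : Trm F) : Prop :=
  ∃ (f : F) (pre post : List (Trm F)) (a b : Trm F), Red R a b ∧
    t = Trm.appList (.sym f) (pre ++ a :: post) ∧ u = Trm.appList (.sym f) (pre ++ b :: post)

/-- `>ₛ`: the closure of the dependency pair relation by substitution and left-application:
`f t₁…t_p >ₛ g u₁…u_q` iff there are a dependency pair `f l₁…l_i > g m₁…m_j` with `i ≤ p`
and `j ≤ q` and a substitution `σ` such that `t_k →* l_kσ` for `k ≤ i` and `m_kσ = u_k`
for `k ≤ j`. -/
def GTsub {F : Type} (R : Rules F) (t u : Trm F) : Prop :=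
  ∃ (f g : F) (ts us ls ms : List (Trm F)) (σ : ℕ → Trm F),
    t = Trm.appList (.sym f) ts ∧ u = Trm.appList (.sym g) us ∧
    DepPair R f ls g ms ∧ ls.length ≤ ts.length ∧ ms.length ≤ us.length ∧
    (∀ (k : ℕ) (tk lk : Trm F), ts[k]? = some tk → ls[k]? = some lk → RedStar R tk (Trm.subst σ lk)) ∧
    (∀ (k : ℕ) (mk : Trm F), ms[k]? = some mk → us[k]? = some (Trm.subst σ mk))

/-- The call relation `≻̃ = →arg* · >ₛ` on `ℂ`. -/
def CallRel {F : Type} (R : Rules F) (Θ sΘ : F → Trm F) (I : Interp F) (t u : Trm F) : Prop :=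
  t ∈ CC R Θ sΘ I ∧ u ∈ CC R Θ sΘ I ∧
    ∃ v, Relation.ReflTransGen (ArgRed R) t v ∧ GTsub R v u

/-! # Precedence and well-structured systems -/

/-- `f ⪰ g` (one step): `g` occurs in `Θ_f` or in the right-hand side of a rule of `f`. -/
def PrecBase {F : Type} (R : Rules F) (Θ : F → Trm F) (f g : F) : Prop :=
  Subterm (.sym g) (Θ f) ∨
  ∃ (ls : List (Trm F)) (r : Trm F), (Trm.appList (.sym f) ls, r) ∈ R ∧ Subterm (.sym g) r

/-- `⪰`: the smallest quasi-order containing `PrecBase`. -/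
def Preceq {F : Type} (R : Rules F) (Θ : F → Trm F) : F → F → Prop :=
  Relation.ReflTransGen (PrecBase R Θ)

/-- `≻`: the strict part of `⪰`. -/
def Prec {F : Type} (R : Rules F) (Θ : F → Trm F) (f g : F) : Prop :=
  Preceq R Θ f g ∧ ¬ Preceq R Θ g f

/-- The restricted type system `⊢_{≺ f}`: as `Typing`, but function symbols may only be
introduced when strictly smaller than `f` in the precedence. -/
inductive LTyp {F : Type} (R : Rules F) (Θ sΘ : F → Trm F) (f : F) :
    List (Trm F) → Trm F → Trm F → Prop
  | ax : LTyp R Θ sΘ f [] .type .kind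
  | var {Γ A s} : Trm.IsSort s → LTyp R Θ sΘ f Γ A s →
      LTyp R Θ sΘ f (A :: Γ) (.var 0) (Trm.shift A)
  | weak {Γ A s b B} : Trm.IsSort s → LTyp R Θ sΘ f Γ A s → LTyp R Θ sΘ f Γ b B →
      LTyp R Θ sΘ f (A :: Γ) (Trm.shift b) (Trm.shift B)
  | prod {Γ A B s} : Trm.IsSort s → LTyp R Θ sΘ f Γ A .type → LTyp R Θ sΘ f (A :: Γ) B s →
      LTyp R Θ sΘ f Γ (.pi A B) s
  | abs {Γ A b B s} : Trm.IsSort s → LTyp R Θ sΘ f (A :: Γ) b B →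
      LTyp R Θ sΘ f Γ (.pi A B) s → LTyp R Θ sΘ f Γ (.lam A b) (.pi A B)
  | app {Γ t a A B} : LTyp R Θ sΘ f Γ t (.pi A B) → LTyp R Θ sΘ f Γ a A →
      LTyp R Θ sΘ f Γ (.app t a) (Trm.subst1 a B)
  | conv {Γ a A B s} : LTyp R Θ sΘ f Γ a A → Joinable R A B → LTyp R Θ sΘ f Γ B s →
      Trm.IsSort s → LTyp R Θ sΘ f Γ a B
  | symb (g : F) : Prec R Θ f g → Trm.IsSort (sΘ g) → LTyp R Θ sΘ f [] (Θ g) (sΘ g) →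
      LTyp R Θ sΘ f [] (.sym g) (Θ g)

/-- The arguments `y⃗γ = [y₁γ, …, y_jγ]` of an instantiated dependency pair right-hand
side, where `y_j` is de Bruijn variable `0`. -/
def dpArgs {F : Type} (γ : ℕ → Trm F) (j : ℕ) : List (Trm F) :=
  (List.range j).reverse.map γ

/-- The restricted type system `⊢_{f l⃗}` (computability closure): as `Typing`, except that
types are required to be typable using symbols smaller than `f` only, and function symbols
are introduced either as undefined constants or through instances of dependency pairs of
`f l⃗`. -/
inductive RTyp {F : Type} (R : Rules F) (Θ sΘ : F → Trm F) (f : F) (ls : List (Trm F)) :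
    List (Trm F) → Trm F → Trm F → Prop
  | ax : RTyp R Θ sΘ f ls [] .type .kind
  | var {Γ A s} : Trm.IsSort s → LTyp R Θ sΘ f Γ A s →
      RTyp R Θ sΘ f ls (A :: Γ) (.var 0) (Trm.shift A)
  | weak {Γ A s b B} : Trm.IsSort s → LTyp R Θ sΘ f Γ A s → RTyp R Θ sΘ f ls Γ b B →
      RTyp R Θ sΘ f ls (A :: Γ) (Trm.shift b) (Trm.shift B)
  | prod {Γ A B s} : Trm.IsSort s → RTyp R Θ sΘ f ls Γ A .type →
      RTyp R Θ sΘ f ls (A :: Γ) B s → RTyp R Θ sΘ f ls Γ (.pi A B) s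
  | abs {Γ A b B s} : Trm.IsSort s → RTyp R Θ sΘ f ls (A :: Γ) b B →
      LTyp R Θ sΘ f Γ (.pi A B) s → RTyp R Θ sΘ f ls Γ (.lam A b) (.pi A B)
  | app {Γ t a A B s} : Trm.IsSort s → RTyp R Θ sΘ f ls Γ t (.pi A B) →
      RTyp R Θ sΘ f ls Γ a A → LTyp R Θ sΘ f Γ (.pi A B) s →
      RTyp R Θ sΘ f ls Γ (.app t a) (Trm.subst1 a B)
  | conv {Γ a A B s s'} : Trm.IsSort s → Trm.IsSort s' → RTyp R Θ sΘ f ls Γ a A →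
      Joinable R A B → LTyp R Θ sΘ f Γ B s → LTyp R Θ sΘ f Γ A s' →
      RTyp R Θ sΘ f ls Γ a B
  | dp {Γ : List (Trm F)} (g : F) (γ : ℕ → Trm F) (j : ℕ) :
      j ≤ Trm.piArity (Θ g) → Trm.IsSort (sΘ g) → LTyp R Θ sΘ f [] (Θ g) (sΘ g) →
      (∀ i A, (Trm.teleN j (Θ g))[i]? = some A →
        RTyp R Θ sΘ f ls Γ (γ i) (Trm.subst (fun k => γ (k + i + 1)) A)) →
      DepPair R f ls g (dpArgs γ j) →
      RTyp R Θ sΘ f ls Γ (Trm.appList (.sym g) (dpArgs γ j)) (Trm.subst γ (Trm.piCodN j (Θ g)))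
  | const (g : F) : ¬ Defined R g → Trm.IsSort (sΘ g) → LTyp R Θ sΘ f [] (Θ g) (sΘ g) →
      RTyp R Θ sΘ f ls [] (.sym g) (Θ g)

/-- `R` is well-structured (wrt the assignment `Δ` of an environment to every rule):
(a) `≻` is well-founded; (b) `|l⃗| ≤ arit(Θ_f)` for every rule `f l⃗ → r`;
(c) `|m⃗| ≤ arit(Θ_g)` for every dependency pair `f l⃗ > g m⃗`;
(d) `Δ_{f l⃗→r} ⊢_{f l⃗} r : U[x⃗↦l⃗]` for every rule `f l⃗ → r`, where `Θ_f = Πx⃗:T⃗.U`. -/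
def WellStructured {F : Type} (R : Rules F) (Θ sΘ : F → Trm F)
    (Δ : Trm F → Trm F → List (Trm F)) : Prop :=
  WellFounded (fun g f => Prec R Θ f g) ∧
  (∀ l r, (l, r) ∈ R → ∀ (f : F) ls, l = Trm.appList (.sym f) ls →
    ls.length ≤ Trm.piArity (Θ f)) ∧
  (∀ (f : F) ls (g : F) ms, DepPair R f ls g ms → ms.length ≤ Trm.piArity (Θ g)) ∧
  (∀ l r, (l, r) ∈ R → ∀ (f : F) ls, l = Trm.appList (.sym f) ls →
    RTyp R Θ sΘ f ls (Δ l r) r (Trm.subst (mkSubst ls.reverse) (Trm.piCodN ls.length (Θ f))))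

/-- `R` is accessible: for every rule `f l⃗ → r` with `Θ_f = Πx⃗:T⃗.U`, `|x⃗| = |l⃗|`, and
every substitution `σ`, `σ ⊨ Δ_{f l⃗→r}` whenever `⊢ Θ_f : s_f`, `Θ_f ∈ ⟦s_f⟧` and
`[x⃗↦l⃗]σ ⊨ x⃗:T⃗`. -/
def Accessible {F : Type} (R : Rules F) (Θ sΘ : F → Trm F) (I : Interp F)
    (Δ : Trm F → Trm F → List (Trm F)) : Prop :=
  ∀ l r, (l, r) ∈ R → ∀ (f : F) ls, l = Trm.appList (.sym f) ls → ∀ σ : ℕ → Trm F,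
    Typing R Θ sΘ [] (Θ f) (sΘ f) → Θ f ∈ interp R I (sΘ f) Trm.var →
    Models R I (compSubst (mkSubst ls.reverse) σ) (Trm.teleN ls.length (Θ f)) →
    Models R I σ (Δ l r)

/-- A term in `𝕂 ∪ {KIND}`. -/
def IsKindLike {F : Type} (t : Trm F) : Prop := Trm.IsKind t ∨ t = .kind

/-- `R` is plain function-passing (PFP): for every rule `f l⃗ → r` with `Θ_f = Πx⃗:T⃗.U` and
`|x⃗| = |l⃗|`, no `l_i` is a kind or `KIND`, and every `(y : T) ∈ Δ_{f l⃗→r}` satisfies: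
either there is `i` with `y = l_i` and `T = T_i[x⃗↦l⃗]`, or `y ∈ FV(l_i)` and `T = D t⃗`
with `D` undefined and `|t⃗| = arit(Θ_D)`. -/
def PFP {F : Type} (R : Rules F) (Θ : F → Trm F) (Δ : Trm F → Trm F → List (Trm F)) : Prop :=
  ∀ l r, (l, r) ∈ R → ∀ (f : F) ls, l = Trm.appList (.sym f) ls →
    (∀ li ∈ ls, ¬ IsKindLike li) ∧
    (∀ i A, (Δ l r)[i]? = some A →
      (∃ (k : ℕ) (Tk : Trm F), ls[k]? = some (Trm.var i) ∧ (Trm.piDoms (Θ f))[k]? = some Tk ∧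
        Trm.rename (fun j => j + i + 1) A = Trm.subst (mkSubst ((ls.take k).reverse)) Tk) ∨
      ((∃ (k : ℕ) (lk : Trm F), ls[k]? = some lk ∧ i ∈ Trm.FV lk) ∧
        ∃ (D : F) (ts : List (Trm F)), Trm.rename (fun j => j + i + 1) A =
          Trm.appList (.sym D) ts ∧ ¬ Defined R D ∧ ts.length = Trm.piArity (Θ D)))

/-! # Size-change termination -/

/-- Entries of size-change matrices: `−1`, `0` or `∞`. -/
inductive SCTe : Type
  | minusOne : SCTe
  | zero : SCTe
  | infty : SCTe
deriving DecidableEq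

/-- Min-plus multiplication of entries (addition, truncated at `−1`). -/
def SCTe.comp : SCTe → SCTe → SCTe
  | .infty, _ => .infty
  | _, .infty => .infty
  | .minusOne, _ => .minusOne
  | _, .minusOne => .minusOne
  | .zero, .zero => .zero

/-- Minimum of entries (`−1 < 0 < ∞`). -/
def SCTe.min : SCTe → SCTe → SCTe
  | .minusOne, _ => .minusOne
  | _, .minusOne => .minusOne
  | .zero, _ => .zero
  | .infty, x => x

/-- Base of the relation `⊵`: `f t₁…t_n ⊵ t_i` for `f ∈ F`. -/
def ArgSubBase {F : Type} (t u : Trm F) : Prop :=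
  ∃ (f : F) (ts : List (Trm F)), t = Trm.appList (.sym f) ts ∧ u ∈ ts

/-- `⊵`: the smallest transitive relation such that `f t₁…t_n ⊵ t_i` for `f ∈ F`. -/
def ArgGT {F : Type} : Trm F → Trm F → Prop := Relation.TransGen ArgSubBase

open Classical in
/-- The size-change matrix of a dependency pair `f l₁…l_p > g m₁…m_q`:
`a_{ij} = −1` if `l_i ⊵ m_j`, `a_{ij} = 0` if `l_i = m_j`, `a_{ij} = ∞` otherwise
(in particular if `i > p` or `j > q`). -/
noncomputable def dpMatrix {F : Type} (ls ms : List (Trm F)) : ℕ → ℕ → SCTe := fun i j =>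
  match ls[i]?, ms[j]? with
  | some li, some mj =>
      if ArgGT li mj then .minusOne else if li = mj then .zero else .infty
  | _, _ => .infty

/-- Min-plus product of matrices, the middle dimension being `d`. -/
def matComp (d : ℕ) (M N : ℕ → ℕ → SCTe) : ℕ → ℕ → SCTe := fun i j =>
  ((List.range d).map fun k => (M i k).comp (N k j)).foldr SCTe.min .infty

/-- The transitive closure of the call graph of `R`: edges are labeled by the matrices of
the dependency pairs, multiplied in the min-plus semiring along paths. -/
inductive TCEdge {F : Type} (R : Rules F) (Θ : F → Trm F) : F → F → (ℕ → ℕ → SCTe) → Prop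
  | base {f g : F} {ls ms : List (Trm F)} : DepPair R f ls g ms →
      TCEdge R Θ f g (dpMatrix ls ms)
  | comp {f g h : F} {M N : ℕ → ℕ → SCTe} : TCEdge R Θ f g M → TCEdge R Θ g h N →
      TCEdge R Θ f h (matComp (Trm.piArity (Θ g)) M N)

/-- `R` is size-change terminating: in the transitive closure of the call graph, every
idempotent matrix labeling a loop has some `−1` on its diagonal. -/
def SCT {F : Type} (R : Rules F) (Θ : F → Trm F) : Prop :=
  ∀ (f : F) (M : ℕ → ℕ → SCTe), TCEdge R Θ f f M → matComp (Trm.piArity (Θ f)) M M = M →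
    ∃ i < Trm.piArity (Θ f), M i i = SCTe.minusOne

/-! # Substitution calculus -/

namespace Trm

variable {F : Type}

theorem upRen_comp (ρ ρ' : ℕ → ℕ) : upRen (ρ' ∘ ρ) = upRen ρ' ∘ upRen ρ := by
  funext n; cases n <;> rfl

theorem rename_rename (t : Trm F) (ρ ρ' : ℕ → ℕ) :
    rename ρ' (rename ρ t) = rename (ρ' ∘ ρ) t := by
  induction t generalizing ρ ρ' <;> simp_all [rename, upRen_comp]

theorem up_comp_upRen (ρ : ℕ → ℕ) (σ : ℕ → Trm F) : up (σ ∘ ρ) = up σ ∘ upRen ρ := by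
  funext n; cases n <;> rfl

theorem subst_rename (t : Trm F) (ρ : ℕ → ℕ) (σ : ℕ → Trm F) :
    subst σ (rename ρ t) = subst (σ ∘ ρ) t := by
  induction t generalizing ρ σ <;> simp_all [rename, subst, up_comp_upRen]

theorem up_rename_comp (σ : ℕ → Trm F) (ρ : ℕ → ℕ) :
    up (fun n => rename ρ (σ n)) = fun n => rename (upRen ρ) (up σ n) := by
  funext n
  cases n with
  | zero => rfl
  | succ n => simp only [up, rename_rename]; rfl

theorem rename_subst (t : Trm F) (σ : ℕ → Trm F) (ρ : ℕ → ℕ) :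
    rename ρ (subst σ t) = subst (fun n => rename ρ (σ n)) t := by
  induction t generalizing ρ σ <;> simp_all [rename, subst, up_rename_comp]

theorem up_compSubst (τ σ : ℕ → Trm F) :
    up (compSubst τ σ) = compSubst (up τ) (up σ) := by
  funext n
  cases n with
  | zero => rfl
  | succ n => simp only [up, compSubst, rename_subst, subst_rename]; rfl

theorem subst_subst (t : Trm F) (τ σ : ℕ → Trm F) :
    subst σ (subst τ t) = subst (compSubst τ σ) t := by
  induction t generalizing τ σ <;> simp_all [subst, up_compSubst]
  rfl

theorem up_var : up (var : ℕ → Trm F) = var := by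
  funext n; cases n <;> rfl

theorem subst_var (t : Trm F) : subst var t = t := by
  induction t <;> simp_all [subst, up_var]

theorem subst1_subst_up (a t : Trm F) (σ : ℕ → Trm F) :
    subst1 a (subst (up σ) t) = subst (scons a σ) t := by
  rw [subst1, subst_subst]
  congr 1
  funext n
  cases n with
  | zero => rfl
  | succ n =>
    simp only [compSubst, up, subst_rename]
    exact subst_var (σ n)

theorem subst_subst1 (a t : Trm F) (σ : ℕ → Trm F) :
    subst σ (subst1 a t) = subst1 (subst σ a) (subst (up σ) t) := by
  rw [subst1_subst_up, subst1, subst_subst]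
  congr 1
  funext n; cases n <;> rfl

theorem isKind_rename (t : Trm F) (ρ : ℕ → ℕ) : IsKind (rename ρ t) ↔ IsKind t := by
  induction t generalizing ρ <;> simp_all [rename, IsKind]

theorem rename_eq_kind {t : Trm F} {ρ : ℕ → ℕ} : rename ρ t = kind ↔ t = kind := by
  cases t <;> simp [rename]

theorem isKindLike_rename (t : Trm F) (ρ : ℕ → ℕ) :
    IsKindLike (rename ρ t) ↔ IsKindLike t := by
  rw [IsKindLike, IsKindLike, isKind_rename, rename_eq_kind]

theorem subst_appList (σ : ℕ → Trm F) (h : Trm F) (ts : List (Trm F)) :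
    subst σ (appList h ts) = appList (subst σ h) (ts.map (subst σ)) := by
  induction ts generalizing h with
  | nil => rfl
  | cons a as ih => exact ih _

theorem appList_eq_or_app (h : Trm F) (ts : List (Trm F)) :
    appList h ts = h ∨ ∃ u v, appList h ts = app u v := by
  induction ts generalizing h with
  | nil => exact .inl rfl
  | cons a as ih =>
    rcases ih (app h a) with e | e
    · exact .inr ⟨h, a, e⟩
    · exact .inr e

end Trm

/-! # Reduction -/

section Reduction

variable {F : Type} {R : Rules F}

theorem IsRewriteSystem.subst_lhs (hRS : IsRewriteSystem R) {l r : Trm F} (h : (l, r) ∈ R)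
    (σ : ℕ → Trm F) :
    (∃ f, Trm.subst σ l = .sym f) ∨ ∃ u v, Trm.subst σ l = .app u v := by
  obtain ⟨-, f, ls, e⟩ := hRS _ h
  obtain rfl : l = _ := e
  rw [Trm.subst_appList]
  exact (Trm.appList_eq_or_app _ _).imp_left fun e => ⟨f, e⟩

theorem Red.pi_inv (hRS : IsRewriteSystem R) {A B U : Trm F} (h : Red R (.pi A B) U) :
    ∃ A' B', U = .pi A' B' ∧ RedStar R A A' ∧ RedStar R B B' := by
  generalize e : Trm.pi A B = T at h
  cases h with
  | rule σ hr => rcases hRS.subst_lhs hr σ with ⟨f, h⟩ | ⟨u, v, h⟩ <;> simp [h] at e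
  | piL h => cases e; exact ⟨_, _, rfl, .single h, .refl⟩
  | piR h => cases e; exact ⟨_, _, rfl, .refl, .single h⟩
  | _ => cases e

theorem RedStar.pi_inv (hRS : IsRewriteSystem R) {A B U : Trm F} (h : RedStar R (.pi A B) U) :
    ∃ A' B', U = .pi A' B' ∧ RedStar R A A' ∧ RedStar R B B' := by
  induction h with
  | refl => exact ⟨_, _, rfl, .refl, .refl⟩
  | tail _ h ih =>
    obtain ⟨A₁, B₁, rfl, hA, hB⟩ := ih
    obtain ⟨A₂, B₂, rfl, hA', hB'⟩ := h.pi_inv hRS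
    exact ⟨_, _, rfl, hA.trans hA', hB.trans hB'⟩

theorem normalForm_kind (hRS : IsRewriteSystem R) : NormalForm R (.kind : Trm F) := by
  intro u h
  generalize e : (Trm.kind : Trm F) = T at h
  cases h with
  | rule σ hr => rcases hRS.subst_lhs hr σ with ⟨f, h⟩ | ⟨u, v, h⟩ <;> simp [h] at e
  | _ => cases e

theorem NormalForm.eq_of_redStar {t u : Trm F} (ht : NormalForm R t) (h : RedStar R t u) :
    u = t := by
  rcases Relation.ReflTransGen.cases_head h with h | ⟨v, h, -⟩
  · exact h.symm
  · exact (ht v h).elim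

theorem Red.subst {t u : Trm F} (h : Red R t u) (σ : ℕ → Trm F) :
    Red R (Trm.subst σ t) (Trm.subst σ u) := by
  induction h generalizing σ with
  | beta A b a => rw [Trm.subst_subst1]; exact .beta _ _ _
  | rule τ h => rw [Trm.subst_subst, Trm.subst_subst]; exact .rule _ h
  | appL _ ih => exact .appL (ih σ)
  | appR _ ih => exact .appR (ih σ)
  | piL _ ih => exact .piL (ih σ)
  | piR _ ih => exact .piR (ih _)
  | lamL _ ih => exact .lamL (ih σ)
  | lamR _ ih => exact .lamR (ih _)

theorem RedStar.subst {t u : Trm F} (h : RedStar R t u) (σ : ℕ → Trm F) :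
    RedStar R (Trm.subst σ t) (Trm.subst σ u) := by
  induction h with
  | refl => exact .refl
  | tail _ h ih => exact ih.tail (h.subst σ)

theorem SN.redStar {t u : Trm F} (ht : SN R t) (h : RedStar R t u) : SN R u := by
  induction h with
  | refl => exact ht
  | tail _ h ih => exact ih.inv h

theorem SN.exists_normalForm {t : Trm F} (ht : SN R t) :
    ∃ u, RedStar R t u ∧ NormalForm R u := by
  induction ht with
  | intro t _ ih =>
    by_cases hn : NormalForm R t
    · exact ⟨t, .refl, hn⟩
    · obtain ⟨v, hv⟩ := not_forall_not.1 hn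
      obtain ⟨u, hu, hnu⟩ := ih v hv
      exact ⟨u, .head hv hu, hnu⟩

/-- Newman's lemma: a terminating term is confluent if reduction is locally confluent. -/
theorem LocallyConfluent.joinable (hconf : LocallyConfluent R) {t : Trm F} (ht : SN R t) :
    ∀ {u v}, RedStar R t u → RedStar R t v → Joinable R u v := by
  induction ht with
  | intro t _ ih =>
    intro u v hu hv
    rcases Relation.ReflTransGen.cases_head hu with rfl | ⟨u₁, hu₁, hu⟩
    · exact ⟨v, hv, .refl⟩
    rcases Relation.ReflTransGen.cases_head hv with rfl | ⟨v₁, hv₁, hv'⟩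
    · exact ⟨u, .refl, .head hu₁ hu⟩
    obtain ⟨w, huw, hvw⟩ := hconf _ _ _ hu₁ hv₁
    obtain ⟨x, hux, hwx⟩ := ih _ hu₁ hu huw
    obtain ⟨y, hxy, hvy⟩ := ih _ hv₁ (hvw.trans hwx) hv'
    exact ⟨y, hux.trans hxy, hvy⟩

theorem LocallyConfluent.redStar_normalForm (hconf : LocallyConfluent R) {t u v : Trm F}
    (ht : SN R t) (hu : RedStar R t u) (hv : RedStar R t v) (hn : NormalForm R v) :
    RedStar R u v := by
  obtain ⟨w, huw, hvw⟩ := hconf.joinable ht hu hv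
  rwa [hn.eq_of_redStar hvw] at huw

end Reduction

/-! # Typable products -/

section TypingLemmas

variable {F : Type} {R : Rules F} {Θ sΘ : F → Trm F}

theorem Typing.ne_kind {Γ : List (Trm F)} {t T : Trm F} (h : Typing R Θ sΘ Γ t T) :
    t ≠ .kind := by
  induction h with
  | weak _ _ _ _ ih => exact fun e => ih (Trm.rename_eq_kind.1 e)
  | conv _ _ _ _ ih _ => exact ih
  | _ => nofun

theorem PresTyping.redStar (hpres : PresTyping R Θ sΘ) {Γ : List (Trm F)} {t u T : Trm F}
    (h : Typing R Θ sΘ Γ t T) (hr : RedStar R t u) : Typing R Θ sΘ Γ u T := by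
  induction hr with
  | refl => exact h
  | tail _ hr ih => exact hpres _ _ _ _ ih hr

theorem Typing.eq_kind_of_isKind (hRS : IsRewriteSystem R) (hpres : PresTyping R Θ sΘ)
    {Γ : List (Trm F)} {t T : Trm F} (h : Typing R Θ sΘ Γ t T) (ht : Trm.IsKind t) :
    T = .kind := by
  induction h with
  | ax => rfl
  | weak _ _ _ _ ih =>
    exact Trm.rename_eq_kind.2 (ih ((Trm.isKind_rename _ _).1 ht))
  | prod _ _ _ _ ih => exact ih ht
  | conv _ hj hB _ ih _ =>
    obtain ⟨v, hv, hBv⟩ := hj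
    rw [ih ht] at hv
    rw [(normalForm_kind hRS).eq_of_redStar hv] at hBv
    exact ((hpres.redStar hB hBv).ne_kind rfl).elim
  | _ => exact ht.elim

theorem Typing.pi_components (hRS : IsRewriteSystem R) (hpres : PresTyping R Θ sΘ)
    {Γ : List (Trm F)} {A B T : Trm F} (h : Typing R Θ sΘ Γ (.pi A B) T) :
    ¬ IsKindLike A ∧ B ≠ .kind := by
  generalize e : Trm.pi A B = t at h
  induction h generalizing A B with
  | prod _ hA hB _ _ =>
    cases e
    refine ⟨?_, hB.ne_kind⟩
    rintro (hK | rfl)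
    · cases hA.eq_kind_of_isKind hRS hpres hK
    · exact hA.ne_kind rfl
  | @weak _ _ _ b _ _ _ _ _ ih =>
    cases b with
    | pi A₀ B₀ =>
      cases e
      rw [Trm.isKindLike_rename, Ne, Trm.rename_eq_kind]
      exact ih rfl
    | _ => cases e
  | conv _ _ _ _ ih _ => exact ih e
  | _ => cases e

end TypingLemmas

/-! # The interpretation -/

section Interpretation

variable {F : Type} {R : Rules F} {I : Interp F}

theorem domD_redStar {T T' : Trm F} (hT : T ∈ domD R I) (h : RedStar R T T') :
    T' ∈ domD R I :=
  ⟨hT.1.redStar h, fun A B hp => hT.2 A B (h.trans hp)⟩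

theorem interpF_eq_piPart (hconf : LocallyConfluent R) {T A B : Trm F} (hT : T ∈ domD R I)
    (h : RedStar R T (.pi A B)) (hn : NormalForm R (.pi A B)) :
    interpF R I T = Part.some (piPart I A B) := by
  have hex : ∃ A B, RedStar R T (.pi A B) ∧ NormalForm R (.pi A B) := ⟨A, B, h, hn⟩
  have hs := hex.choose_spec.choose_spec
  have e := hs.2.eq_of_redStar (hconf.redStar_normalForm hT.1 hs.1 h hn)
  injection e with eA eB
  refine Part.eq_some_iff.2 ⟨hT, ?_⟩
  simp only [interpF, dif_pos hex]
  rw [← eB, ← eA]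

theorem interpF_eq_SNset {T : Trm F} (hT : T ∈ domD R I)
    (h : ¬ ∃ A B, RedStar R T (.pi A B) ∧ NormalForm R (.pi A B)) :
    interpF R I T = Part.some (SNset R) := by
  refine Part.eq_some_iff.2 ⟨hT, ?_⟩
  simp only [interpF, dif_neg h]

theorem interpF_redStar (hconf : LocallyConfluent R) {T T' : Trm F} (hT : T ∈ domD R I)
    (h : RedStar R T T') : interpF R I T = interpF R I T' := by
  have hT' := domD_redStar hT h
  by_cases hex : ∃ A B, RedStar R T (.pi A B) ∧ NormalForm R (.pi A B)
  · obtain ⟨A, B, hp, hn⟩ := hex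
    rw [interpF_eq_piPart hconf hT hp hn,
      interpF_eq_piPart hconf hT' (hconf.redStar_normalForm hT.1 h hp hn) hn]
  · rw [interpF_eq_SNset hT hex, interpF_eq_SNset hT']
    rintro ⟨A, B, hp, hn⟩
    exact hex ⟨A, B, h.trans hp, hn⟩

theorem interp_eq_partMem {T : Trm F} {σ : ℕ → Trm F} (hT : ¬ IsKindLike T)
    (hd : Trm.subst σ T ∈ domD R I) : interp R I T σ = partMem I (Trm.subst σ T) := by
  cases T with
  | type => exact (hT (.inl trivial)).elim
  | kind => exact (hT (.inr rfl)).elim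
  | pi A B =>
    have hB : ¬ Trm.IsKind B := fun h => hT (.inl h)
    rw [interp, if_neg hB, if_pos hd]
  | _ => rw [interp, if_pos hd]

theorem partMem_pi (hRS : IsRewriteSystem R) (hconf : LocallyConfluent R)
    (hI : interpF R I = I) {A B : Trm F} (hd : .pi A B ∈ domD R I) :
    partMem I (.pi A B) = piPart I A B := by
  have hDom : ∀ {T}, (I T).Dom → T ∈ domD R I := fun h => by rw [← hI] at h; exact h
  have hred : ∀ {T T'}, T ∈ domD R I → RedStar R T T' → I T' = I T := fun hT h => by
    have := interpF_redStar hconf hT h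
    rw [hI] at this
    exact this.symm
  obtain ⟨N, hN, hn⟩ := hd.1.exists_normalForm
  obtain ⟨A', B', rfl, hA, hB⟩ := hN.pi_inv hRS
  obtain ⟨hAd, hBd⟩ := hd.2 A B .refl
  have hval : I (.pi A B) = Part.some (piPart I A' B') := by
    have := interpF_eq_piPart hconf hd hN hn
    rwa [hI] at this
  have hIA : I A' = I A := hred (hDom hAd) hA
  have hIB : ∀ S ∈ I A, ∀ a ∈ S, I (Trm.subst1 a B') = I (Trm.subst1 a B) :=
    fun S hS a ha => hred (hDom (hBd S hS a ha)) (hB.subst _)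
  ext t
  simp only [partMem, hval, Part.mem_some_iff, forall_eq, piPart, hIA, Set.mem_ofPred_eq]
  refine forall₂_congr fun S hS => forall₂_congr fun a ha => ?_
  rw [hIB S hS a ha]

end Interpretation

/-- Lemma 4(d) of the paper. If `Πx:A.B` is typable and
`(Πx:A.B)σ ∈ 𝒟`, then `⟦Πx:A.B⟧σ = {t | ∀ a ∈ ⟦A⟧σ, t a ∈ ⟦B⟧[x↦a,σ]}`.
(In the de Bruijn representation, the freshness condition `x ∉ dom(σ) ∪ FV(σ)` is
built into the lifting of substitutions.) -/
theorem interp_pi {F : Type} (R : Rules F) (Θ sΘ : F → Trm F)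
    (hRS : IsRewriteSystem R)
    (hconf : LocallyConfluent R)
    (hpres : PresTyping R Θ sΘ)
    (calI : Interp F) (hlfp : IsLfpInterp (interpF R) calI)
    (A B : Trm F) (σ : ℕ → Trm F)
    (htyp : ∃ (Γ : List (Trm F)) (U : Trm F), Typing R Θ sΘ Γ (.pi A B) U)
    (hdom : Trm.subst σ (.pi A B) ∈ domD R calI) :
    interp R calI (.pi A B) σ =
      {t | ∀ a ∈ interp R calI A σ, Trm.app t a ∈ interp R calI B (Trm.scons a σ)} := by
  by_cases hBK : Trm.IsKind B
  · rw [interp, if_pos hBK]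
  obtain ⟨Γ, U, hΓ⟩ := htyp
  obtain ⟨hA, hBk⟩ := hΓ.pi_components hRS hpres
  have hB : ¬ IsKindLike B := by rintro (h | h) <;> contradiction
  have hI := hlfp.1
  have hDom : ∀ {T}, (calI T).Dom → T ∈ domD R calI := fun h => by rw [← hI] at h; exact h
  obtain ⟨hAd, hBd⟩ := hdom.2 _ _ .refl
  rw [interp_eq_partMem (T := .pi A B) (by rintro (h | h); exacts [hBK h, nomatch h]) hdom,
    interp_eq_partMem hA (hDom hAd)]
  refine (partMem_pi hRS hconf hI hdom).trans ?_
  have hmem : ∀ {a}, a ∈ partMem calI (Trm.subst σ A) → ∃ S ∈ calI (Trm.subst σ A), a ∈ S :=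
    fun ha => ⟨_, Part.get_mem hAd, ha _ (Part.get_mem hAd)⟩
  have hint : ∀ S ∈ calI (Trm.subst σ A), ∀ a ∈ S, interp R calI B (Trm.scons a σ) =
      partMem calI (Trm.subst1 a (Trm.subst (Trm.up σ) B)) := by
    intro S hS a ha
    have hd := hDom (hBd S hS a ha)
    rw [Trm.subst1_subst_up] at hd ⊢
    exact interp_eq_partMem hB hd
  ext t
  constructor
  · intro ht a ha
    obtain ⟨S, hS, haS⟩ := hmem ha
    rw [hint S hS a haS]
    exact ht S hS a haS
  · intro ht S hS a haS
    have h := ht a fun S' hS' => Part.mem_unique hS hS' ▸ haS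
    rwa [hint S hS a haS] at h
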